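/- Let R be a Cohen–Macaulay finitely generated ℕ-graded k-algebra of Krull dimension d, I a homogeneous ideal with R/I of finite length, and x_1, …, x_d a homogeneous system of parameters of R of degrees δ_1, …, δ_d. For a finitely generated ℤ-graded R-module N of finite length let H_N(t) = Σ_j λ_k(N_j) t^j, and set χ_n(t) = Σ_{i=0}^{∞} (−1)^i H_{Tor_i^R(R/(x_1,…,x_d), R/I^{[p^n]})}(t). Then for every nonzero complex number y, the limit lim_{n→∞} χ_n(e^{−iy/p^n}) exists and F(R,R,I)(y) = (1/(δ_1 δ_2 ⋯ δ_d (iy)^d)) · lim_{n→∞} χ_n(e^{−iy/p^n}). -/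

import Mathlib

open Filter Complex

noncomputable section

/-- The Frobenius bracket power `I^{[q]}` of an ideal. -/
def bracketPow {R : Type*} [CommSemiring R] (I : Ideal R) (q : ℕ) : Ideal R :=
  Ideal.span ((fun x : R => x ^ q) '' (I : Set R))

/-- The map induced by an `R`-linear map on the quotients by `J • ⊤`. -/
def inducedQuot {R A B : Type*} [CommRing R] [AddCommGroup A] [Module R A]
    [AddCommGroup B] [Module R B] (J : Ideal R) (f : A →ₗ[R] B) :
    (A ⧸ (J • ⊤ : Submodule R A)) →ₗ[R] B ⧸ (J • ⊤ : Submodule R B) :=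
  Submodule.mapQ _ _ f (by
    rw [← Submodule.map_le_iff_le_comap, Submodule.map_smul'']
    exact Submodule.smul_mono le_rfl le_top)

/-- Degree-`j` cycles at spot `i` of `F_• ⧸ J F_•`. -/
def cyclesPiece (k : Type*) {R : Type*} [Field k] [CommRing R] [Algebra k R]
    (F : ℕ → Type) [∀ i, AddCommGroup (F i)] [∀ i, Module R (F i)]
    [∀ i, Module k (F i)] [∀ i, IsScalarTower k R (F i)]
    (ℱ : ∀ i, ℤ → Submodule k (F i))
    (dF : ∀ i, F (i + 1) →ₗ[R] F i)
    (J : Ideal R) (i : ℕ) (j : ℤ) : Submodule k (F i ⧸ (J • ⊤ : Submodule R (F i))) :=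
  match i with
  | 0 => (ℱ 0 j).map (((J • ⊤ : Submodule R (F 0)).mkQ).restrictScalars k)
  | (i' + 1) =>
      (ℱ (i' + 1) j).map (((J • ⊤ : Submodule R (F (i' + 1))).mkQ).restrictScalars k) ⊓
        (LinearMap.ker (inducedQuot J (dF i'))).restrictScalars k

/-- Degree-`j` boundaries at spot `i` of `F_• ⧸ J F_•`. -/
def boundariesPiece (k : Type*) {R : Type*} [Field k] [CommRing R] [Algebra k R]
    (F : ℕ → Type) [∀ i, AddCommGroup (F i)] [∀ i, Module R (F i)]
    [∀ i, Module k (F i)] [∀ i, IsScalarTower k R (F i)]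
    (ℱ : ∀ i, ℤ → Submodule k (F i))
    (dF : ∀ i, F (i + 1) →ₗ[R] F i)
    (J : Ideal R) (i : ℕ) (j : ℤ) : Submodule k (F i ⧸ (J • ⊤ : Submodule R (F i))) :=
  (ℱ i j).map (((J • ⊤ : Submodule R (F i)).mkQ).restrictScalars k) ⊓
    (LinearMap.range (inducedQuot J (dF i))).restrictScalars k

/-- `λ_k(Tor_i^R(M, R/J)_j)` computed from a graded free resolution of `M`. -/
def torPieceDim (k : Type*) {R : Type*} [Field k] [CommRing R] [Algebra k R]
    (F : ℕ → Type) [∀ i, AddCommGroup (F i)] [∀ i, Module R (F i)]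
    [∀ i, Module k (F i)] [∀ i, IsScalarTower k R (F i)]
    (ℱ : ∀ i, ℤ → Submodule k (F i))
    (dF : ∀ i, F (i + 1) →ₗ[R] F i)
    (J : Ideal R) (i : ℕ) (j : ℤ) : ℕ :=
  Module.finrank k (cyclesPiece k F ℱ dF J i j) -
    Module.finrank k (boundariesPiece k F ℱ dF J i j)

/-- `p^{-nd} Σ_{j∈ℤ} λ_k((R/I^{[pⁿ]})_j) e^{-iyj/pⁿ}`. -/
def FnGen (k : Type*) {R M : Type*} [Field k] [CommRing R] [Algebra k R]
    [AddCommGroup M] [Module R M] [Module k M] [IsScalarTower k R M]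
    (ℳ : ℤ → Submodule k M) (I : Ideal R) (p d n : ℕ) (y : ℂ) : ℂ :=
  (1 / (p : ℂ) ^ n) ^ d *
    ∑' j : ℤ, (Module.finrank k ((ℳ j).map
        (((bracketPow I (p ^ n) • ⊤ : Submodule R M)).mkQ.restrictScalars k)) : ℂ) *
      Complex.exp (-Complex.I * y * (j : ℂ) / (p : ℂ) ^ n)

/-!
Let `F_•` be the graded free resolution of `R ⧸ (x)`. As `x` is a regular sequence, this quotient
has projective dimension at most `d`, so the images of the differentials are projective from spot
`d` on. A finitely generated graded projective `R`-module is free on homogeneous elements, hence the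
Hilbert function of its reduction modulo a homogeneous ideal `J` is a Laurent polynomial applied to
the Hilbert function of `R ⧸ J`. Therefore the Tor groups vanish beyond spot `d + 1`, and there is a
single Laurent polynomial `Q` such that the Euler characteristic of `Tor(R ⧸ (x), R ⧸ J)` is `Q`
times the Hilbert series of `R ⧸ J`, for every homogeneous `J`.

Taking `J = 0` identifies `Q`: the Euler characteristic is then the Hilbert series of `R ⧸ (x)`,
which is `∏ (1 - t ^ δ_i)` times that of `R`, and multiplication by the Hilbert series of `R` is
injective on Laurent polynomials. Taking `J = I^{[pⁿ]}` and `t = exp (-iy / pⁿ)` gives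
`χ_n = ∏ pⁿ (1 - exp (-iyδ_j / pⁿ)) * F_n`, and `pⁿ (1 - exp (-c / pⁿ))` tends to `c`.
-/

section ProjectiveDimension

open CategoryTheory RingTheory.Sequence

universe u

variable {R : Type u} [CommRing R]

theorem hasProjectiveDimensionLT_quotient_ofList {rs : List R} {n : ℕ} (M : ModuleCat.{u} R)
    (hM : HasProjectiveDimensionLT M n) (hrs : IsWeaklyRegular M rs) :
    HasProjectiveDimensionLT (ModuleCat.of R (M ⧸ (Ideal.ofList rs • ⊤ : Submodule R M)))
      (n + rs.length) := by
  induction rs generalizing M n with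
  | nil =>
    rw [Ideal.ofList_nil, Submodule.bot_smul]
    exact hasProjectiveDimensionLT_of_iso (Submodule.quotEquivOfEqBot ⊥ rfl).symm.toModuleIso n
  | cons r rs ih =>
    rw [isWeaklyRegular_cons_iff] at hrs
    have hquot : HasProjectiveDimensionLT (ModuleCat.of R (QuotSMulTop r M)) (n + 1) :=
      hrs.1.smulShortComplex_shortExact.hasProjectiveDimensionLT_X₃ n hM
        (hasProjectiveDimensionLT_of_ge M n (n + 1) n.le_succ)
    have := ih (ModuleCat.of R (QuotSMulTop r M)) hquot hrs.2
    rw [List.length_cons, add_comm rs.length, ← add_assoc]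
    exact hasProjectiveDimensionLT_of_iso
      (Submodule.quotOfListConsSMulTopEquivQuotSMulTopInner M r rs).symm.toModuleIso _

theorem hasProjectiveDimensionLT_ker {A B : Type u} [AddCommGroup A] [Module R A]
    [Module.Projective R A] [AddCommGroup B] [Module R B] {f : A →ₗ[R] B}
    (hf : Function.Surjective f) {n : ℕ} (hn : n ≠ 0)
    (hB : HasProjectiveDimensionLT (ModuleCat.of R B) (n + 1)) :
    HasProjectiveDimensionLT (ModuleCat.of R (LinearMap.ker f)) n := by
  have hA : HasProjectiveDimensionLT (ModuleCat.of R A) 1 :=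
    projective_iff_hasProjectiveDimensionLT_one.1 ((IsProjective.iff_projective _).1 inferInstance)
  exact (LinearMap.shortExact_shortComplexKer hf).hasProjectiveDimensionLT_X₁ n
    (hasProjectiveDimensionLT_of_ge _ 1 n (by omega)) hB

theorem projective_range_of_hasProjectiveDimensionLT {d : ℕ} {M : Type u} [AddCommGroup M]
    [Module R M] (hM : HasProjectiveDimensionLT (ModuleCat.of R M) (d + 1))
    {F : ℕ → Type u} [∀ i, AddCommGroup (F i)] [∀ i, Module R (F i)]
    [∀ i, Module.Projective R (F i)]
    {f : ∀ i, F (i + 1) →ₗ[R] F i} {ε : F 0 →ₗ[R] M} (hε : Function.Surjective ε)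
    (hex₀ : LinearMap.range (f 0) = LinearMap.ker ε)
    (hex : ∀ i, LinearMap.range (f (i + 1)) = LinearMap.ker (f i)) {i : ℕ} (hi : d ≤ i) :
    Module.Projective R (LinearMap.range (f i)) := by
  have hrange (i : ℕ) :
      HasProjectiveDimensionLT (ModuleCat.of R (LinearMap.range (f i))) (d - i + 1) := by
    induction i with
    | zero =>
      rw [hex₀]
      exact hasProjectiveDimensionLT_ker hε (by simp)
        (hasProjectiveDimensionLT_of_ge _ (d + 1) _ (by omega))
    | succ i ih =>
      rw [hex, ← LinearMap.ker_rangeRestrict]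
      exact hasProjectiveDimensionLT_ker (LinearMap.surjective_rangeRestrict _) (by simp)
        (hasProjectiveDimensionLT_of_ge _ (d - i + 1) _ (by omega))
  have := hrange i
  rw [Nat.sub_eq_zero_of_le hi, zero_add, ← projective_iff_hasProjectiveDimensionLT_one] at this
  exact (IsProjective.iff_projective _).2 this

end ProjectiveDimension

section Splitting

variable {R A B : Type*} [CommRing R] [AddCommGroup A] [Module R A] [AddCommGroup B] [Module R B]

theorem exists_isProj_ker_of_projective_range (f : A →ₗ[R] B)
    [Module.Projective R (LinearMap.range f)] :
    ∃ π : A →ₗ[R] A, LinearMap.IsProj (LinearMap.ker f) π := by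
  obtain ⟨s, hs⟩ := Module.projective_lifting_property f.rangeRestrict LinearMap.id
    f.surjective_rangeRestrict
  have hfs (b : LinearMap.range f) : f (s b) = b :=
    congrArg Subtype.val (LinearMap.congr_fun hs b)
  refine ⟨LinearMap.id - s ∘ₗ f.rangeRestrict, ⟨fun a => ?_, fun a ha => ?_⟩⟩
  · simp [hfs]
  · rw [← LinearMap.ker_rangeRestrict, LinearMap.mem_ker] at ha
    simp [ha]

theorem smul_top_inf_le_smul_of_isProj {N : Submodule R A} {π : A →ₗ[R] A}
    (hπ : LinearMap.IsProj N π) (J : Ideal R) : J • (⊤ : Submodule R A) ⊓ N ≤ J • N := by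
  rintro a ⟨haJ, haN⟩
  have : π a ∈ (J • (⊤ : Submodule R A)).map π := Submodule.mem_map_of_mem haJ
  rwa [Submodule.map_smul'', Submodule.map_top, hπ.range, hπ.map_id a haN] at this

end Splitting

section FiniteDimensional

variable {k A B C : Type*} [Field k] [AddCommGroup A] [Module k A] [AddCommGroup B] [Module k B]
  [AddCommGroup C] [Module k C]

theorem finrank_map_eq_of_forall_eq_zero_iff {V : Submodule k A} {f : A →ₗ[k] B} {g : A →ₗ[k] C}
    (h : ∀ v ∈ V, f v = 0 ↔ g v = 0) :
    Module.finrank k (V.map f) = Module.finrank k (V.map g) := by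
  have hker : LinearMap.ker (f.domRestrict V) = LinearMap.ker (g.domRestrict V) := by
    ext ⟨v, hv⟩
    simpa using h v hv
  rw [← LinearMap.range_domRestrict, ← LinearMap.range_domRestrict]
  exact LinearEquiv.finrank_eq ((LinearMap.quotKerEquivRange _).symm ≪≫ₗ
    Submodule.quotEquivOfEq _ _ hker ≪≫ₗ LinearMap.quotKerEquivRange _)

theorem finrank_map_add_finrank_inf_ker (W : Submodule k A) [FiniteDimensional k W]
    (f : A →ₗ[k] B) :
    Module.finrank k (W.map f) + Module.finrank k (W ⊓ LinearMap.ker f : Submodule k A) =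
      Module.finrank k W := by
  rw [← LinearMap.finrank_range_add_finrank_ker (f.domRestrict W), LinearMap.range_domRestrict,
    LinearMap.ker_domRestrict, ← Submodule.finrank_map_subtype_eq, Submodule.map_comap_subtype]

variable {ι : Type*}

/-- A product of submodules, as a submodule of the product, is the product of the underlying
modules. -/
def piUnivEquiv (p : ι → Submodule k A) : Submodule.pi Set.univ p ≃ₗ[k] ∀ i, p i where
  toFun v i := ⟨v.1 i, v.2 i trivial⟩
  invFun v := ⟨fun i => v i, fun i _ => (v i).2⟩
  map_add' _ _ := rfl
  map_smul' _ _ := rfl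

instance finiteDimensional_pi_univ [Finite ι] (p : ι → Submodule k A)
    [∀ i, FiniteDimensional k (p i)] :
    FiniteDimensional k (Submodule.pi Set.univ p) :=
  (piUnivEquiv p).symm.finiteDimensional

theorem finrank_pi_univ [Fintype ι] (p : ι → Submodule k A) [∀ i, FiniteDimensional k (p i)] :
    Module.finrank k (Submodule.pi Set.univ p) = ∑ i, Module.finrank k (p i) := by
  rw [(piUnivEquiv p).finrank_eq, Module.finrank_pi_fintype]

end FiniteDimensional

section Graded

open DirectSum

variable {k R M N : Type*} [Field k] [CommRing R] [Algebra k R] {𝒜 : ℤ → Submodule k R}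
  [AddCommGroup M] [Module R M] [Module k M] {ℳ : ℤ → Submodule k M}

theorem smul_mem_add [SetLike.GradedSMul 𝒜 ℳ] {a b : ℤ} {r : R} {z : M} (hr : r ∈ 𝒜 a)
    (hz : z ∈ ℳ b) : r • z ∈ ℳ (a + b) :=
  SetLike.GradedSMul.smul_mem hr hz

theorem decompose_smul_of_mem_left [Decomposition ℳ] [SetLike.GradedSMul 𝒜 ℳ] {u : R} {δ : ℤ}
    (hu : u ∈ 𝒜 δ) (z : M) (t : ℤ) :
    (decompose ℳ (u • z) t : M) = u • (decompose ℳ z (t - δ) : M) := by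
  induction z using Decomposition.inductionOn ℳ with
  | zero => simp
  | @homogeneous s z =>
    have huz := smul_mem_add hu z.2
    obtain rfl | hst := eq_or_ne t (δ + s)
    · rw [decompose_of_mem_same _ huz, add_sub_cancel_left, decompose_of_mem_same _ z.2]
    · rw [decompose_of_mem_ne _ huz hst.symm, decompose_of_mem_ne _ z.2 (by omega), smul_zero]
  | add z w hz hw => simp [smul_add, decompose_add, hz, hw]

variable [GradedAlgebra 𝒜] [Decomposition ℳ]

theorem decompose_map [AddCommGroup N] [Module k N] {𝒩 : ℤ → Submodule k N} [Decomposition 𝒩]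
    {G : Type*} [FunLike G M N] [AddMonoidHomClass G M N] (f : G)
    (hf : ∀ t, ∀ z ∈ ℳ t, f z ∈ 𝒩 t) (t : ℤ) (z : M) :
    (decompose 𝒩 (f z) t : N) = f (decompose ℳ z t) := by
  induction z using Decomposition.inductionOn ℳ with
  | zero => simp
  | @homogeneous s z =>
    obtain rfl | hst := eq_or_ne s t
    · rw [decompose_of_mem_same _ (hf _ _ z.2), decompose_of_mem_same _ z.2]
    · rw [decompose_of_mem_ne _ (hf _ _ z.2) hst, decompose_of_mem_ne _ z.2 hst, map_zero]
  | add z w hz hw => simp [decompose_add, hz, hw]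

theorem decompose_smul_of_mem [SetLike.GradedSMul 𝒜 ℳ] {b : ℤ} {e : M} (he : e ∈ ℳ b) (r : R)
    (t : ℤ) : (decompose ℳ (r • e) t : M) = (decompose 𝒜 r (t - b) : R) • e := by
  induction r using Decomposition.inductionOn 𝒜 with
  | zero => simp
  | @homogeneous s r =>
    have hre := smul_mem_add r.2 he
    obtain rfl | hst := eq_or_ne t (s + b)
    · rw [decompose_of_mem_same _ hre, add_sub_cancel_right, decompose_of_mem_same _ r.2]
    · rw [decompose_of_mem_ne _ hre hst.symm, decompose_of_mem_ne _ r.2 (by omega), zero_smul]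
  | add r s hr hs => simp [add_smul, decompose_add, hr, hs]

theorem isHomogeneous_smul_top [SetLike.GradedSMul 𝒜 ℳ] {J : Ideal R}
    (hJ : J.IsHomogeneous 𝒜) : (J • ⊤ : Submodule R M).IsHomogeneous ℳ := by
  intro t z hz
  induction hz using Submodule.smul_induction_on' with
  | smul r hr z hz =>
    clear hz
    induction z using Decomposition.inductionOn ℳ with
    | zero => simp
    | homogeneous z =>
      rw [decompose_smul_of_mem (𝒜 := 𝒜) z.2]
      exact Submodule.smul_mem_smul (hJ _ hr) trivial
    | add z w hz hw =>
      rw [smul_add, decompose_add]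
      exact add_mem hz hw
  | add z _ w _ hz hw =>
    rw [decompose_add]
    exact add_mem hz hw

variable {ι : Type*} {e : ι → M} {a : ι → ℤ}

theorem map_linearCombination_pi [Fintype ι] [IsScalarTower k R M] [SetLike.GradedSMul 𝒜 ℳ]
    (he : ∀ i, e i ∈ ℳ (a i)) (j : ℤ) :
    (Submodule.pi Set.univ fun i => 𝒜 (j - a i)).map
        ((Fintype.linearCombination R e).restrictScalars k) =
      ℳ j ⊓ (Submodule.span R (Set.range e)).restrictScalars k := by
  rw [← Fintype.range_linearCombination]
  apply le_antisymm
  · rintro _ ⟨c, hc, rfl⟩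
    refine ⟨?_, c, rfl⟩
    simp only [LinearMap.coe_restrictScalars, Fintype.linearCombination_apply]
    refine Submodule.sum_mem _ fun i _ => ?_
    simpa using smul_mem_add (hc i trivial) (he i)
  · rintro _ ⟨hz, c, rfl⟩
    refine ⟨fun i => decompose 𝒜 (c i) (j - a i), fun i _ => SetLike.coe_mem _, ?_⟩
    rw [SetLike.mem_coe, Fintype.linearCombination_apply] at hz
    simp only [LinearMap.coe_restrictScalars, Fintype.linearCombination_apply]
    rw [← decompose_of_mem_same ℳ hz, decompose_sum, DFinsupp.finsetSum_apply,
      AddSubmonoidClass.coe_finsetSum]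
    simp only [fun i => decompose_smul_of_mem (𝒜 := 𝒜) (he i)]

theorem finiteDimensional_inf_span [Finite ι] [IsScalarTower k R M] [SetLike.GradedSMul 𝒜 ℳ]
    (he : ∀ i, e i ∈ ℳ (a i)) (j : ℤ) (hfin : ∀ i, FiniteDimensional k (𝒜 (j - a i))) :
    FiniteDimensional k
      (ℳ j ⊓ (Submodule.span R (Set.range e)).restrictScalars k : Submodule k M) := by
  have := Fintype.ofFinite ι
  rw [← map_linearCombination_pi (𝒜 := 𝒜) he j]
  infer_instance

end Graded

section GradedFree

open DirectSum

variable {k R M : Type*} [Field k] [CommRing R] [AddCommGroup M] [Module R M] [Module k M]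
  {ℳ : ℤ → Submodule k M} [Decomposition ℳ]

theorem exists_finset_span_eq {Z : Submodule R M}
    (hZ : Z.IsHomogeneous ℳ) (hfg : Z.FG) :
    ∃ S : Finset M, (∀ z ∈ S, ∃ t, z ∈ ℳ t) ∧ Submodule.span R S = Z := by
  classical
  have hspan : Submodule.span R {z | z ∈ Z ∧ ∃ t, z ∈ ℳ t} = Z := by
    refine le_antisymm (Submodule.span_le.2 fun z hz => hz.1) fun z hz => ?_
    rw [← sum_support_decompose ℳ z]
    exact Submodule.sum_mem _ fun t _ => Submodule.subset_span ⟨hZ t hz, t, SetLike.coe_mem _⟩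
  rw [← hspan, Submodule.fg_span_iff_fg_span_finset_subset] at hfg
  obtain ⟨S, hS, hSspan⟩ := hfg
  exact ⟨S, fun z hz => (hS hz).2, by rw [← hSspan, hspan]⟩

theorem exists_irredundant_finset_span_eq {Z : Submodule R M}
    (hZ : Z.IsHomogeneous ℳ) (hfg : Z.FG) :
    ∃ S : Finset M, (∀ z ∈ S, ∃ t, z ∈ ℳ t) ∧ Submodule.span R S = Z ∧
      ∀ z ∈ S, z ∉ Submodule.span R (S \ {z} : Set M) := by
  classical
  obtain ⟨S, ⟨hhom, hspan⟩, hmin⟩ :=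
    exists_minimal_of_wellFoundedLT _ (exists_finset_span_eq hZ hfg)
  refine ⟨S, hhom, hspan, fun z hz hmem => ?_⟩
  have herase : Submodule.span R (S.erase z : Set M) = Z := by
    rw [← hspan, Finset.coe_erase]
    refine le_antisymm (Submodule.span_mono Set.sdiff_subset) (Submodule.span_le.2 fun w hw => ?_)
    obtain rfl | hwz := eq_or_ne w z
    exacts [hmem, Submodule.subset_span ⟨hw, hwz⟩]
  have := hmin ⟨fun w hw => hhom w (Finset.mem_of_mem_erase hw), herase⟩ (S.erase_subset z)
  exact (Finset.mem_erase.1 (this hz)).1 rfl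

variable [Algebra k R] {𝒜 : ℤ → Submodule k R} [GradedAlgebra 𝒜]

/-- The ideal generated by the homogeneous elements of positive degree. Mathlib's
`HomogeneousIdeal.irrelevant` needs a canonically ordered index, which `ℤ` is not. -/
def irrelevantIdeal (𝒜 : ℤ → Submodule k R) : Ideal R :=
  Ideal.span {r | ∃ t > 0, r ∈ 𝒜 t}

theorem decompose_eq_zero_of_neg (hneg : ∀ t < 0, 𝒜 t = ⊥) (r : R) {t : ℤ} (ht : t < 0) :
    decompose 𝒜 r t = 0 := by
  rw [← Subtype.coe_inj, ZeroMemClass.coe_zero, ← Submodule.mem_bot k, ← hneg t ht]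
  exact SetLike.coe_mem _

theorem decompose_eq_zero_of_mem_irrelevantIdeal (hneg : ∀ t < 0, 𝒜 t = ⊥) {u : R}
    (hu : u ∈ irrelevantIdeal 𝒜) : ∀ t < 1, decompose 𝒜 u t = 0 := by
  induction hu using Submodule.span_induction with
  | mem u hu =>
    obtain ⟨s, hs, hu⟩ := hu
    exact fun t ht => Subtype.ext (decompose_of_mem_ne _ hu (by omega))
  | zero => simp
  | add u v _ _ hu hv =>
    intro t ht
    simp [decompose_add, hu t ht, hv t ht]
  | smul r u _ hu =>
    intro t ht
    rw [smul_eq_mul, decompose_mul]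
    exact mul_apply_eq_zero (fun s hs => decompose_eq_zero_of_neg hneg r hs) hu
      (by rwa [zero_add])

theorem mem_irrelevantIdeal_of_decompose_zero_eq_zero (hneg : ∀ t < 0, 𝒜 t = ⊥) {r : R}
    (hr : decompose 𝒜 r 0 = 0) : r ∈ irrelevantIdeal 𝒜 := by
  classical
  rw [← sum_support_decompose 𝒜 r]
  refine Submodule.sum_mem _ fun t _ => ?_
  obtain ht | rfl | ht := lt_trichotomy t 0
  · simp [decompose_eq_zero_of_neg hneg r ht]
  · simp [hr]
  · exact Ideal.subset_span ⟨t, ht, SetLike.coe_mem _⟩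

theorem eq_zero_of_mem_irrelevantIdeal_of_mul_eq_self (hneg : ∀ t < 0, 𝒜 t = ⊥) {u r : R}
    (hu : u ∈ irrelevantIdeal 𝒜) (hr : u * r = r) : r = 0 := by
  have hvanish (n : ℕ) : ∀ t < (n : ℤ), decompose 𝒜 r t = 0 := by
    induction n with
    | zero => exact fun t => decompose_eq_zero_of_neg hneg r
    | succ n ih =>
      intro t ht
      rw [← hr, decompose_mul]
      exact mul_apply_eq_zero (decompose_eq_zero_of_mem_irrelevantIdeal hneg hu) ih
        (by push_cast at ht; omega)
  apply (decompose 𝒜).injective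
  ext t
  rw [hvanish (t.toNat + 1) t (by omega), decompose_zero, DirectSum.zero_apply]

theorem finiteDimensional_piece [IsNoetherianRing R] (hneg : ∀ t < 0, 𝒜 t = ⊥)
    (hzero : ∀ r ∈ 𝒜 0, ∃ c : k, algebraMap k R c = r) (j : ℤ) :
    FiniteDimensional k (𝒜 j) := by
  obtain ⟨S, hS, hspan⟩ := (Submodule.fg_span_iff_fg_span_finset_subset _).1
    (IsNoetherian.noetherian (irrelevantIdeal 𝒜))
  choose a ha hmem using fun s : S => hS s.2
  obtain ⟨n, hn⟩ : ∃ n : ℕ, j < n := ⟨j.toNat + 1, by omega⟩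
  induction n generalizing j with
  | zero =>
    rw [hneg j (by simpa using hn)]
    infer_instance
  | succ n ih =>
    obtain rfl | hj := eq_or_ne j 0
    · have : 𝒜 0 ≤ LinearMap.range (Algebra.linearMap k R) := fun r hr => hzero r hr
      exact Submodule.finiteDimensional_of_le this
    · have hfin := finiteDimensional_inf_span (𝒜 := 𝒜) hmem j
        (fun s => ih _ (by have := ha s; push_cast at hn; omega))
      have hle : 𝒜 j ≤
          𝒜 j ⊓ (Submodule.span R (Set.range ((↑) : S → R))).restrictScalars k := by
        refine le_inf le_rfl fun r hr => ?_
        rw [Subtype.range_coe, ← hspan]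
        exact mem_irrelevantIdeal_of_decompose_zero_eq_zero hneg
          (Subtype.ext (decompose_of_mem_ne _ hr hj))
      exact Submodule.finiteDimensional_of_le hle

variable {ι : Type*} {e : ι → M} {a : ι → ℤ}

theorem mem_irrelevantIdeal_of_sum_smul_eq_zero [Fintype ι] [IsScalarTower k R M]
    [SetLike.GradedSMul 𝒜 ℳ] (hneg : ∀ t < 0, 𝒜 t = ⊥)
    (hzero : ∀ r ∈ 𝒜 0, ∃ c : k, algebraMap k R c = r)
    (he : ∀ i, e i ∈ ℳ (a i)) (hirr : ∀ i, e i ∉ Submodule.span R (e '' {i}ᶜ))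
    {c : ι → R} (hc : ∑ i, c i • e i = 0) (i : ι) : c i ∈ irrelevantIdeal 𝒜 := by
  classical
  apply mem_irrelevantIdeal_of_decompose_zero_eq_zero hneg
  by_contra hci
  obtain ⟨u, hu⟩ := hzero _ (decompose 𝒜 (c i) 0).2
  have hu₀ : u ≠ 0 := by
    rintro rfl
    exact hci (Subtype.ext (by rw [← hu, map_zero]; rfl))
  have hrel : ∑ l, (decompose 𝒜 (c l) (a i - a l) : R) • e l = 0 := by
    simp only [← fun l => decompose_smul_of_mem (𝒜 := 𝒜) (he l) (c l) (a i)]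
    rw [← AddSubmonoidClass.coe_finsetSum, ← DFinsupp.finsetSum_apply, ← decompose_sum, hc]
    simp
  rw [← Finset.add_sum_erase _ _ (Finset.mem_univ i), sub_self, ← hu, algebraMap_smul,
    add_eq_zero_iff_eq_neg] at hrel
  refine hirr i ?_
  rw [← inv_smul_smul₀ hu₀ (e i), hrel]
  refine Submodule.smul_of_tower_mem _ _ (Submodule.neg_mem _ (Submodule.sum_mem _ fun l hl => ?_))
  exact Submodule.smul_mem _ _ (Submodule.subset_span ⟨l, (Finset.mem_erase.1 hl).1, rfl⟩)

theorem linearIndependent_of_irredundant_of_projective [Finite ι] [IsNoetherianRing R]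
    [IsScalarTower k R M] [SetLike.GradedSMul 𝒜 ℳ] (hneg : ∀ t < 0, 𝒜 t = ⊥)
    (hzero : ∀ r ∈ 𝒜 0, ∃ c : k, algebraMap k R c = r)
    (he : ∀ i, e i ∈ ℳ (a i)) (hirr : ∀ i, e i ∉ Submodule.span R (e '' {i}ᶜ))
    (hproj : Module.Projective R (Submodule.span R (Set.range e))) :
    LinearIndependent R e := by
  classical
  have := Fintype.ofFinite ι
  let K := LinearMap.ker (Fintype.linearCombination R e)
  rw [← Fintype.range_linearCombination] at hproj
  obtain ⟨π, hπ⟩ := exists_isProj_ker_of_projective_range (Fintype.linearCombination R e)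
  have hcoeff : K ≤ irrelevantIdeal 𝒜 • ⊤ := fun c hc => by
    rw [pi_eq_sum_univ' c]
    exact Submodule.sum_mem _ fun i _ => Submodule.smul_mem_smul
      (mem_irrelevantIdeal_of_sum_smul_eq_zero hneg hzero he hirr hc i) trivial
  obtain ⟨u, hu, huK⟩ := Submodule.exists_mem_and_smul_eq_self_of_fg_of_le_smul _ K
    (IsNoetherian.noetherian K)
    ((le_inf hcoeff le_rfl).trans (smul_top_inf_le_smul_of_isProj hπ _))
  rw [Fintype.linearIndependent_iff]
  intro c hc i
  exact eq_zero_of_mem_irrelevantIdeal_of_mul_eq_self hneg hu (congrFun (huK c hc) i)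

theorem exists_homogeneous_basis_of_projective [IsNoetherianRing R] [IsScalarTower k R M]
    [SetLike.GradedSMul 𝒜 ℳ] (hneg : ∀ t < 0, 𝒜 t = ⊥)
    (hzero : ∀ r ∈ 𝒜 0, ∃ c : k, algebraMap k R c = r) {Z : Submodule R M}
    (hZ : Z.IsHomogeneous ℳ) (hfg : Z.FG) (hproj : Module.Projective R Z) :
    ∃ (S : Finset M) (a : S → ℤ), (∀ z : S, (z : M) ∈ ℳ (a z)) ∧
      LinearIndependent R ((↑) : S → M) ∧ Submodule.span R S = Z := by
  obtain ⟨S, hhom, rfl, hirr⟩ := exists_irredundant_finset_span_eq hZ hfg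
  choose a ha using fun z : S => hhom z z.2
  have hirr' (z : S) : (z : M) ∉ Submodule.span R ((↑) '' ({z}ᶜ : Set S)) := by
    rw [Set.image_compl_eq_range_sdiff_image Subtype.val_injective, Subtype.range_coe,
      Set.image_singleton]
    exact hirr z z.2
  exact ⟨S, a, ha, linearIndependent_of_irredundant_of_projective hneg hzero ha hirr'
    (Subtype.range_coe.symm ▸ hproj), rfl⟩

end GradedFree

section LaurentAction

open LaurentPolynomial

/-- The action of integral Laurent polynomials on integer sequences in which `T a` is the shift
by `a`. It encodes multiplication of Hilbert series by Laurent polynomials. -/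
def laurentMul : ℤ[T;T⁻¹] →ₐ[ℤ] Module.End ℤ (ℤ → ℤ) :=
  AddMonoidAlgebra.lift ℤ _ ℤ
    { toFun a := LinearMap.funLeft ℤ ℤ (· - a.toAdd)
      map_one' := by ext; simp
      map_mul' a b := by
        ext h j
        simp [LinearMap.funLeft_apply, sub_sub] }

@[simp]
theorem laurentMul_T (a : ℤ) (h : ℤ → ℤ) (j : ℤ) : laurentMul (T a) h j = h (j - a) := by
  rw [laurentMul, T, AddMonoidAlgebra.lift_single]
  simp [LinearMap.funLeft_apply]

theorem laurentMul_apply (Q : ℤ[T;T⁻¹]) (h : ℤ → ℤ) (j : ℤ) :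
    laurentMul Q h j = Q.coeff.sum fun a c => c * h (j - a) := by
  simp [laurentMul, AddMonoidAlgebra.lift_apply, Finsupp.sum, LinearMap.funLeft_apply]

theorem eq_zero_of_laurentMul_eq_zero {Q : ℤ[T;T⁻¹]} {h : ℤ → ℤ} (hneg : ∀ j < 0, h j = 0)
    (h0 : h 0 ≠ 0) (hQ : laurentMul Q h = 0) : Q = 0 := by
  by_contra hne
  have hsupp : Q.coeff.support.Nonempty := by
    rw [Finsupp.support_nonempty_iff]
    exact fun hc => hne (by ext; simp [hc])
  set m := Q.coeff.support.min' hsupp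
  have hm : Q.coeff m ≠ 0 := Finsupp.mem_support_iff.1 (Finset.min'_mem _ hsupp)
  have hQm : laurentMul Q h m = 0 := congrFun hQ m
  rw [laurentMul_apply, Finsupp.sum, Finset.sum_eq_single_of_mem m (Finset.min'_mem _ hsupp),
    sub_self] at hQm
  · exact (mul_ne_zero hm h0) hQm
  · intro a ha ham
    rw [hneg, mul_zero]
    have := lt_of_le_of_ne (Finset.min'_le _ _ ha) ham.symm
    omega

theorem hasSum_laurentMul {K : Type*} [Field K] [TopologicalSpace K] [IsTopologicalRing K]
    {h : ℤ → ℤ} {t : Kˣ} {S : K} (hS : HasSum (fun j => (h j : K) * (t : K) ^ j) S)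
    (Q : ℤ[T;T⁻¹]) :
    HasSum (fun j => (laurentMul Q h j : K) * (t : K) ^ j)
      (eval₂ (Int.castRingHom K) t Q * S) := by
  induction Q using LaurentPolynomial.induction_on' with
  | add P Q hP hQ => simpa [add_mul] using hP.add hQ
  | C_mul_T a c =>
    rw [eval₂_C_mul_T, Units.val_zpow_eq_zpow_val, eq_intCast (Int.castRingHom K)]
    refine (((Equiv.subRight a).hasSum_iff.2 hS).mul_left ((c : K) * (t : K) ^ a)).congr_fun ?_
    intro j
    have hj : laurentMul (C c * T a) h j = c * h (j - a) := by simp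
    rw [hj, Function.comp_apply, Equiv.subRight_apply, zpow_sub₀ t.ne_zero]
    push_cast
    field_simp [zpow_ne_zero a t.ne_zero]

end LaurentAction

section HilbertFunction

variable {k R M : Type*} [Field k] [CommRing R] [Algebra k R] [AddCommGroup M] [Module R M]
  [Module k M] [IsScalarTower k R M]

/-- The degree `j` piece of the quotient `M ⧸ N` of a graded module. -/
abbrev quotPiece (ℳ : ℤ → Submodule k M) (N : Submodule R M) (j : ℤ) : Submodule k (M ⧸ N) :=
  (ℳ j).map (N.mkQ.restrictScalars k)

/-- The Hilbert function `j ↦ dim (M ⧸ N)_j`, with values in `ℤ` so that Laurent polynomials act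
on it. -/
def hilbertFun (ℳ : ℤ → Submodule k M) (N : Submodule R M) (j : ℤ) : ℤ :=
  Module.finrank k (quotPiece ℳ N j)

theorem hilbertFun_eq_zero_of_le {ℳ : ℤ → Submodule k M} {N : Submodule R M} {j : ℤ}
    (h : ℳ j ≤ N.restrictScalars k) : hilbertFun ℳ N j = 0 := by
  have hbot : quotPiece ℳ N j = ⊥ := by
    rwa [quotPiece, ← le_bot_iff, Submodule.map_le_iff_le_comap, Submodule.comap_bot,
      LinearMap.ker_restrictScalars, Submodule.ker_mkQ]
  rw [hilbertFun, hbot, finrank_bot, Nat.cast_zero]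

theorem linearCombination_mem_smul_top_iff {ι : Type*} [Fintype ι] {e : ι → M}
    (hli : LinearIndependent R e) {J : Ideal R}
    (hJ : J • ⊤ ⊓ Submodule.span R (Set.range e) ≤ J • Submodule.span R (Set.range e))
    (c : ι → R) :
    Fintype.linearCombination R e c ∈ (J • ⊤ : Submodule R M) ↔ ∀ i, c i ∈ J := by
  rw [Fintype.linearCombination_apply]
  refine ⟨fun hc i => ?_, fun hc => ?_⟩
  · have hmem := hJ ⟨hc, Submodule.sum_mem _ fun i _ =>
      Submodule.smul_mem _ _ (Submodule.subset_span ⟨i, rfl⟩)⟩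
    obtain ⟨b, hb, hbc⟩ := (Submodule.mem_ideal_smul_span_iff_exists_sum _ _ _).1 hmem
    rw [Finsupp.sum_fintype _ _ (by simp)] at hbc
    have hi := Fintype.linearIndependent_iff.1 hli (fun i => b i - c i)
      (by simp [sub_smul, hbc]) i
    exact sub_eq_zero.1 hi ▸ hb i
  · exact Submodule.sum_mem _ fun i _ => Submodule.smul_mem_smul (hc i) trivial

theorem finite_support_hilbertFun {ℳ : ℤ → Submodule k M} [DirectSum.Decomposition ℳ]
    {N : Submodule R M} (hN : N.IsHomogeneous ℳ) [FiniteDimensional k (M ⧸ N)] :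
    (Function.support (hilbertFun ℳ N)).Finite := by
  have hmem : ∀ j : Function.support (hilbertFun ℳ N), ∃ z ∈ ℳ j, z ∉ N := fun j =>
    SetLike.not_le_iff_exists.1 (mt hilbertFun_eq_zero_of_le j.2)
  choose z hz hzN using hmem
  have hli : LinearIndependent k fun j => N.mkQ (z j) := by
    rw [linearIndependent_iff']
    intro s c hc j hj
    have hcN : ∑ i ∈ s, c i • z i ∈ N := by
      rw [← Submodule.Quotient.mk_eq_zero, ← Submodule.mkQ_apply, ← hc, map_sum]
      rfl
    have hj' := hN j hcN
    rw [DirectSum.decompose_sum, DFinsupp.finsetSum_apply, AddSubmonoidClass.coe_finsetSum,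
      Finset.sum_eq_single_of_mem j hj, DirectSum.decompose_of_mem_same _
        (Submodule.smul_mem _ _ (hz j))] at hj'
    · by_contra hcj
      exact hzN j ((Submodule.smul_mem_iff (N.restrictScalars k) hcj).1 hj')
    · exact fun i _ hij => DirectSum.decompose_of_mem_ne _ (Submodule.smul_mem _ _ (hz i))
        (Subtype.coe_ne_coe.2 hij)
  exact Set.finite_coe_iff.1 hli.finite

variable {𝒜 : ℤ → Submodule k R} [GradedAlgebra 𝒜] {ℳ : ℤ → Submodule k M}
  [DirectSum.Decomposition ℳ] [SetLike.GradedSMul 𝒜 ℳ]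

theorem finrank_map_mkQ_inf_span (hfin : ∀ j, FiniteDimensional k (𝒜 j)) {ι : Type*} [Fintype ι]
    {e : ι → M} {a : ι → ℤ} (he : ∀ i, e i ∈ ℳ (a i)) (hli : LinearIndependent R e) {J : Ideal R}
    (hJ : J • ⊤ ⊓ Submodule.span R (Set.range e) ≤ J • Submodule.span R (Set.range e)) (j : ℤ) :
    (Module.finrank k ((ℳ j ⊓ (Submodule.span R (Set.range e)).restrictScalars k).map
      ((J • ⊤ : Submodule R M).mkQ.restrictScalars k)) : ℤ) =
        ∑ i, hilbertFun 𝒜 J (j - a i) := by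
  let g : (ι → R) →ₗ[k] ι → R ⧸ (J : Submodule R R) :=
    LinearMap.pi fun i => (Submodule.mkQ J).restrictScalars k ∘ₗ LinearMap.proj i
  have hg : (Submodule.pi Set.univ fun i => 𝒜 (j - a i)).map g =
      Submodule.pi Set.univ fun i => quotPiece 𝒜 J (j - a i) := by
    apply le_antisymm
    · rintro _ ⟨c, hc, rfl⟩ i _
      exact ⟨c i, hc i trivial, rfl⟩
    · intro v hv
      choose c hc hcv using fun i => hv i trivial
      exact ⟨c, fun i _ => hc i, funext hcv⟩
  rw [← map_linearCombination_pi (𝒜 := 𝒜) he j, ← Submodule.map_comp,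
    finrank_map_eq_of_forall_eq_zero_iff (g := g), hg, finrank_pi_univ, Nat.cast_sum]
  · rfl
  intro c _
  rw [LinearMap.comp_apply, LinearMap.coe_restrictScalars, Submodule.mkQ_apply,
    Submodule.Quotient.mk_eq_zero, LinearMap.coe_restrictScalars,
    linearCombination_mem_smul_top_iff hli hJ, funext_iff]
  exact forall_congr' fun i => (Submodule.Quotient.mk_eq_zero _).symm

theorem finiteDimensional_piece_of_finite [IsNoetherianRing R] [Module.Finite R M]
    (hneg : ∀ t < 0, 𝒜 t = ⊥) (hzero : ∀ r ∈ 𝒜 0, ∃ c : k, algebraMap k R c = r) (j : ℤ) :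
    FiniteDimensional k (ℳ j) := by
  obtain ⟨S, hS, hspan⟩ := exists_finset_span_eq (ℳ := ℳ) (Z := (⊤ : Submodule R M))
    (fun _ _ _ => trivial) Module.Finite.fg_top
  choose a ha using fun z : S => hS z z.2
  have := finiteDimensional_inf_span (𝒜 := 𝒜) ha j fun _ => finiteDimensional_piece hneg hzero _
  have hle : ℳ j ≤ ℳ j ⊓ (Submodule.span R (Set.range ((↑) : S → M))).restrictScalars k := by
    rw [Subtype.range_coe, hspan, Submodule.restrictScalars_top, inf_top_eq]
  exact Submodule.finiteDimensional_of_le hle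

open LaurentPolynomial

theorem exists_finrank_map_mkQ_inf_eq_laurentMul [IsNoetherianRing R]
    (hneg : ∀ t < 0, 𝒜 t = ⊥) (hzero : ∀ r ∈ 𝒜 0, ∃ c : k, algebraMap k R c = r)
    {Z : Submodule R M} (hZ : Z.IsHomogeneous ℳ) (hfg : Z.FG) (hproj : Module.Projective R Z) :
    ∃ P : ℤ[T;T⁻¹], ∀ J : Ideal R, J • ⊤ ⊓ Z ≤ J • Z → ∀ j : ℤ,
      (Module.finrank k ((ℳ j ⊓ Z.restrictScalars k).map
        ((J • ⊤ : Submodule R M).mkQ.restrictScalars k)) : ℤ) =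
          laurentMul P (hilbertFun 𝒜 J) j := by
  obtain ⟨S, a, ha, hli, rfl⟩ := exists_homogeneous_basis_of_projective hneg hzero hZ hfg hproj
  refine ⟨∑ z, T (a z), fun J hJ j => ?_⟩
  have hrange : Set.range ((↑) : S → M) = S := Subtype.range_coe
  rw [← hrange] at hJ ⊢
  rw [finrank_map_mkQ_inf_span (finiteDimensional_piece hneg hzero) ha hli hJ]
  simp

theorem exists_hilbertFun_smul_top_eq_laurentMul [IsNoetherianRing R] [Module.Finite R M]
    [Module.Projective R M] (hneg : ∀ t < 0, 𝒜 t = ⊥)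
    (hzero : ∀ r ∈ 𝒜 0, ∃ c : k, algebraMap k R c = r) :
    ∃ P : ℤ[T;T⁻¹], ∀ (J : Ideal R) (j : ℤ),
      hilbertFun ℳ (J • ⊤ : Submodule R M) j = laurentMul P (hilbertFun 𝒜 J) j := by
  obtain ⟨P, hP⟩ := exists_finrank_map_mkQ_inf_eq_laurentMul (ℳ := ℳ)
    (Z := (⊤ : Submodule R M)) hneg hzero (fun _ _ _ => trivial) Module.Finite.fg_top
    (Module.Projective.of_equiv Submodule.topEquiv.symm)
  refine ⟨P, fun J j => ?_⟩
  rw [← hP J inf_le_left j, Submodule.restrictScalars_top, inf_top_eq]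
  rfl

end HilbertFunction

section InducedMaps

open DirectSum

variable {k R M N : Type*} [Field k] [CommRing R] [Algebra k R] {𝒜 : ℤ → Submodule k R}
  [GradedAlgebra 𝒜] [AddCommGroup M] [Module R M] [Module k M] [IsScalarTower k R M]
  {ℳ : ℤ → Submodule k M} [Decomposition ℳ] [AddCommGroup N] [Module R N] [Module k N]
  [IsScalarTower k R N] {𝒩 : ℤ → Submodule k N} [Decomposition 𝒩]

theorem map_piece_eq_inf_range (f : M →ₗ[R] N) (hf : ∀ t, ∀ z ∈ ℳ t, f z ∈ 𝒩 t) (j : ℤ) :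
    (ℳ j).map (f.restrictScalars k) = 𝒩 j ⊓ (LinearMap.range f).restrictScalars k := by
  apply le_antisymm
  · rintro _ ⟨z, hz, rfl⟩
    exact ⟨hf j z hz, z, rfl⟩
  · rintro _ ⟨hz, z, rfl⟩
    refine ⟨decompose ℳ z j, SetLike.coe_mem _, ?_⟩
    rw [LinearMap.restrictScalars_apply, ← decompose_map f hf, decompose_of_mem_same _ hz]

theorem map_inducedQuot_quotPiece (J : Ideal R) (f : M →ₗ[R] N)
    (hf : ∀ t, ∀ z ∈ ℳ t, f z ∈ 𝒩 t) (j : ℤ) :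
    (quotPiece ℳ (J • ⊤) j).map ((inducedQuot J f).restrictScalars k) =
      (𝒩 j ⊓ (LinearMap.range f).restrictScalars k).map
        ((J • ⊤ : Submodule R N).mkQ.restrictScalars k) := by
  rw [← map_piece_eq_inf_range f hf, ← Submodule.map_comp, ← Submodule.map_comp]
  rfl

theorem quotPiece_inf_range_inducedQuot [SetLike.GradedSMul 𝒜 𝒩] {J : Ideal R}
    (hJ : J.IsHomogeneous 𝒜) (f : M →ₗ[R] N) (hf : ∀ t, ∀ z ∈ ℳ t, f z ∈ 𝒩 t) (j : ℤ) :
    quotPiece 𝒩 (J • ⊤) j ⊓ (LinearMap.range (inducedQuot J f)).restrictScalars k =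
      (quotPiece ℳ (J • ⊤) j).map ((inducedQuot J f).restrictScalars k) := by
  apply le_antisymm
  · rintro _ ⟨⟨u, hu, rfl⟩, w, hw⟩
    obtain ⟨w, rfl⟩ := Submodule.mkQ_surjective _ w
    have hmem : f w - u ∈ (J • ⊤ : Submodule R N) := (Submodule.Quotient.eq _).1 hw
    have hmem' := isHomogeneous_smul_top (ℳ := 𝒩) hJ j hmem
    rw [decompose_sub, DirectSum.sub_apply, AddSubgroupClass.coe_sub, decompose_map f hf,
      decompose_of_mem_same _ hu] at hmem'
    exact ⟨_, ⟨_, SetLike.coe_mem _, rfl⟩, (Submodule.Quotient.eq _).2 hmem'⟩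
  · rintro _ ⟨_, ⟨w, hw, rfl⟩, rfl⟩
    exact ⟨⟨f w, hf j w hw, rfl⟩, _, rfl⟩

theorem map_eq_quotPiece_of_surjective {X : Submodule R N} (hX : X.IsHomogeneous 𝒩)
    (ε : M →ₗ[R] N ⧸ X) (hε : ∀ t, ∀ z ∈ ℳ t, ε z ∈ quotPiece 𝒩 X t)
    (hsurj : Function.Surjective ε) (j : ℤ) :
    (ℳ j).map (ε.restrictScalars k) = quotPiece 𝒩 X j := by
  have hlift (z : M) : ∃ v : N, X.mkQ v = ε z ∧
      ∀ t, X.mkQ (decompose 𝒩 v t) = ε (decompose ℳ z t) := by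
    induction z using Decomposition.inductionOn ℳ with
    | zero => exact ⟨0, by simp⟩
    | @homogeneous s z =>
      obtain ⟨v, hv, hvz⟩ := hε s z z.2
      refine ⟨v, hvz, fun t => ?_⟩
      obtain rfl | hst := eq_or_ne s t
      · rwa [decompose_of_mem_same _ hv, decompose_of_mem_same _ z.2]
      · rw [decompose_of_mem_ne _ hv hst, decompose_of_mem_ne _ z.2 hst, map_zero, map_zero]
    | add z w hz hw =>
      obtain ⟨v, hv, hv'⟩ := hz
      obtain ⟨u, hu, hu'⟩ := hw
      refine ⟨v + u, by simp only [map_add, hv, hu], fun t => ?_⟩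
      simp only [decompose_add, DirectSum.add_apply, Submodule.coe_add, map_add, hv', hu']
  apply le_antisymm
  · rintro _ ⟨z, hz, rfl⟩
    exact hε j z hz
  · rintro _ ⟨w, hw, rfl⟩
    obtain ⟨z, hz⟩ := hsurj (X.mkQ w)
    obtain ⟨v, hv, hvz⟩ := hlift z
    have hmem := hX j ((Submodule.Quotient.eq _).1 (hv.trans hz))
    rw [decompose_sub, DirectSum.sub_apply, AddSubgroupClass.coe_sub,
      decompose_of_mem_same _ hw] at hmem
    exact ⟨_, SetLike.coe_mem _, (hvz j).symm.trans ((Submodule.Quotient.eq _).2 hmem)⟩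

end InducedMaps

section Tor

variable {k R : Type*} [Field k] [CommRing R] [Algebra k R] {F : ℕ → Type}
  [∀ i, AddCommGroup (F i)] [∀ i, Module R (F i)] [∀ i, Module k (F i)]
  [∀ i, IsScalarTower k R (F i)] {ℱ : ∀ i, ℤ → Submodule k (F i)}
  {dF : ∀ i, F (i + 1) →ₗ[R] F i}

theorem cyclesPiece_le_quotPiece (J : Ideal R) (i : ℕ) (j : ℤ) :
    cyclesPiece k F ℱ dF J i j ≤ quotPiece (ℱ i) (J • ⊤) j := by
  cases i with
  | zero => exact le_rfl
  | succ i => exact inf_le_left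

theorem torPieceDim_le_hilbertFun [∀ i j, FiniteDimensional k (ℱ i j)] (J : Ideal R)
    (i : ℕ) (j : ℤ) :
    (torPieceDim k F ℱ dF J i j : ℤ) ≤ hilbertFun (ℱ i) (J • ⊤ : Submodule R (F i)) j :=
  Nat.cast_le.2 ((Nat.sub_le _ _).trans (Submodule.finrank_mono (cyclesPiece_le_quotPiece J i j)))

section Exact

variable (hex : ∀ i, LinearMap.range (dF (i + 1)) = LinearMap.ker (dF i))

include hex

theorem boundariesPiece_le_cyclesPiece (J : Ideal R) (i : ℕ) (j : ℤ) :
    boundariesPiece k F ℱ dF J i j ≤ cyclesPiece k F ℱ dF J i j := by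
  cases i with
  | zero => exact inf_le_left
  | succ i =>
    refine inf_le_inf le_rfl ?_
    rintro _ ⟨w, rfl⟩
    obtain ⟨w, rfl⟩ := Submodule.mkQ_surjective _ w
    have hw : dF i (dF (i + 1) w) = 0 := LinearMap.mem_ker.1 (hex i ▸ ⟨w, rfl⟩)
    exact congrArg Submodule.Quotient.mk hw

theorem cast_torPieceDim [∀ i j, FiniteDimensional k (ℱ i j)] (J : Ideal R) (i : ℕ) (j : ℤ) :
    (torPieceDim k F ℱ dF J i j : ℤ) = Module.finrank k (cyclesPiece k F ℱ dF J i j) -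
      Module.finrank k (boundariesPiece k F ℱ dF J i j) := by
  have := Submodule.finiteDimensional_of_le (cyclesPiece_le_quotPiece (dF := dF) (ℱ := ℱ) J i j)
  exact Nat.cast_sub (Submodule.finrank_mono (boundariesPiece_le_cyclesPiece hex J i j))

theorem torPieceDim_succ_eq_zero {J : Ideal R} {i : ℕ}
    (hJ : J • ⊤ ⊓ LinearMap.range (dF i) ≤ J • LinearMap.range (dF i)) (j : ℤ) :
    torPieceDim k F ℱ dF J (i + 1) j = 0 := by
  have hle : cyclesPiece k F ℱ dF J (i + 1) j ≤ boundariesPiece k F ℱ dF J (i + 1) j := by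
    refine inf_le_inf le_rfl fun w hw => ?_
    obtain ⟨w, rfl⟩ := Submodule.mkQ_surjective _ w
    have hmem := hJ ⟨(Submodule.Quotient.mk_eq_zero _).1 hw, w, rfl⟩
    rw [← Submodule.map_top, ← Submodule.map_smul''] at hmem
    obtain ⟨w', hw', hdw⟩ := hmem
    obtain ⟨v, hv⟩ : w - w' ∈ LinearMap.range (dF (i + 1)) := by
      rw [hex, LinearMap.mem_ker, map_sub, hdw, sub_self]
    refine ⟨Submodule.Quotient.mk v, (Submodule.Quotient.eq _).2 ?_⟩
    rwa [hv, sub_sub_cancel_left, Submodule.neg_mem_iff]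
  rw [torPieceDim, (hle.antisymm (boundariesPiece_le_cyclesPiece hex J (i + 1) j)), Nat.sub_self]

end Exact

variable {𝒜 : ℤ → Submodule k R} [GradedAlgebra 𝒜] [∀ i, DirectSum.Decomposition (ℱ i)]
  [∀ i, SetLike.GradedSMul 𝒜 (ℱ i)] {J : Ideal R}
  (hdeg : ∀ i t, ∀ z ∈ ℱ (i + 1) t, dF i z ∈ ℱ i t)

include hdeg

theorem boundariesPiece_eq_map_inf_range (hJ : J.IsHomogeneous 𝒜) (i : ℕ) (j : ℤ) :
    boundariesPiece k F ℱ dF J i j = (ℱ i j ⊓ (LinearMap.range (dF i)).restrictScalars k).map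
      ((J • ⊤ : Submodule R (F i)).mkQ.restrictScalars k) :=
  (quotPiece_inf_range_inducedQuot hJ (dF i) (hdeg i) j).trans
    (map_inducedQuot_quotPiece J (dF i) (hdeg i) j)

theorem finrank_boundariesPiece_add_finrank_cyclesPiece_succ
    [∀ i j, FiniteDimensional k (ℱ i j)] (hJ : J.IsHomogeneous 𝒜) (i : ℕ) (j : ℤ) :
    Module.finrank k (boundariesPiece k F ℱ dF J i j) +
      Module.finrank k (cyclesPiece k F ℱ dF J (i + 1) j) =
        Module.finrank k (quotPiece (ℱ (i + 1)) (J • ⊤ : Submodule R (F (i + 1))) j) := by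
  rw [← finrank_map_add_finrank_inf_ker (quotPiece (ℱ (i + 1)) _ j)
    ((inducedQuot J (dF i)).restrictScalars k),
    ← quotPiece_inf_range_inducedQuot hJ (dF i) (hdeg i)]
  rfl

theorem sum_range_torPieceDim [∀ i j, FiniteDimensional k (ℱ i j)] (hJ : J.IsHomogeneous 𝒜)
    (hex : ∀ i, LinearMap.range (dF (i + 1)) = LinearMap.ker (dF i)) (n : ℕ) (j : ℤ) :
    ∑ i ∈ Finset.range (n + 1), (-1 : ℤ) ^ i * torPieceDim k F ℱ dF J i j =
      ∑ i ∈ Finset.range (n + 1), (-1 : ℤ) ^ i *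
          hilbertFun (ℱ i) (J • ⊤ : Submodule R (F i)) j -
        (-1) ^ n * Module.finrank k (boundariesPiece k F ℱ dF J n j) := by
  induction n with
  | zero =>
    simp only [zero_add, Finset.sum_range_one, pow_zero, one_mul]
    exact cast_torPieceDim hex J 0 j
  | succ n ih =>
    rw [Finset.sum_range_succ, ih, Finset.sum_range_succ _ (n + 1), cast_torPieceDim hex,
      hilbertFun, ← finrank_boundariesPiece_add_finrank_cyclesPiece_succ hdeg hJ]
    push_cast
    ring

end Tor

section Regular

open DirectSum RingTheory.Sequence

variable {k R M : Type*} [Field k] [CommRing R] [Algebra k R] {𝒜 : ℤ → Submodule k R}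
  [AddCommGroup M] [Module R M] [Module k M] [IsScalarTower k R M]
  {ℳ : ℤ → Submodule k M} [Decomposition ℳ] [SetLike.GradedSMul 𝒜 ℳ]

theorem quotPiece_inf_ker_factor {X : Submodule R M} (hX : X.IsHomogeneous ℳ) {u : R} {δ : ℤ}
    (hu : u ∈ 𝒜 δ) (j : ℤ) :
    quotPiece ℳ X j ⊓ LinearMap.ker ((Submodule.factor (le_sup_left :
        X ≤ X ⊔ Ideal.span {u} • ⊤)).restrictScalars k) =
      (quotPiece ℳ X (j - δ)).map ((LinearMap.lsmul R (M ⧸ X) u).restrictScalars k) := by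
  apply le_antisymm
  · rintro _ ⟨⟨v, hv, rfl⟩, hker⟩
    obtain ⟨x, hx, w, hw, hxw⟩ := Submodule.mem_sup.1 ((Submodule.Quotient.mk_eq_zero _).1 hker)
    rw [Submodule.ideal_span_singleton_smul] at hw
    obtain ⟨c, -, huc⟩ := (Submodule.mem_smul_pointwise_iff_exists ..).1 hw
    refine ⟨_, ⟨decompose ℳ c (j - δ), SetLike.coe_mem _, rfl⟩, ?_⟩
    refine ((Submodule.Quotient.eq X).2 ?_).symm
    change v - u • (decompose ℳ c (j - δ) : M) ∈ X
    rw [← decompose_smul_of_mem_left hu, ← decompose_of_mem_same ℳ hv, huc]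
    rw [LinearMap.id_apply] at hxw
    simpa [← hxw] using hX j hx
  · rintro _ ⟨_, ⟨v, hv, rfl⟩, rfl⟩
    refine ⟨⟨u • v, by simpa using smul_mem_add hu hv, rfl⟩, ?_⟩
    refine (Submodule.Quotient.mk_eq_zero _).2 (Submodule.mem_sup_right ?_)
    exact Submodule.smul_mem_smul (Ideal.mem_span_singleton_self u) trivial

theorem hilbertFun_sup_smul_top [∀ j, FiniteDimensional k (ℳ j)] {X : Submodule R M}
    (hX : X.IsHomogeneous ℳ) {u : R} {δ : ℤ} (hu : u ∈ 𝒜 δ) (hreg : IsSMulRegular (M ⧸ X) u)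
    (j : ℤ) :
    hilbertFun ℳ (X ⊔ Ideal.span {u} • ⊤) j = hilbertFun ℳ X j - hilbertFun ℳ X (j - δ) := by
  have hmap : (quotPiece ℳ X j).map ((Submodule.factor (le_sup_left :
      X ≤ X ⊔ Ideal.span {u} • ⊤)).restrictScalars k) = quotPiece ℳ (X ⊔ Ideal.span {u} • ⊤) j :=
    (Submodule.map_comp ..).symm
  have hrank := finrank_map_add_finrank_inf_ker (quotPiece ℳ X j)
    ((Submodule.factor (le_sup_left : X ≤ X ⊔ Ideal.span {u} • ⊤)).restrictScalars k)
  rw [hmap, quotPiece_inf_ker_factor hX hu,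
    finrank_map_eq_of_forall_eq_zero_iff (V := quotPiece ℳ X (j - δ)) (g := LinearMap.id),
    Submodule.map_id] at hrank
  · rw [eq_sub_iff_add_eq, hilbertFun, hilbertFun, hilbertFun]
    exact_mod_cast hrank
  · rintro v -
    refine ⟨fun hv => hreg.right_eq_zero_of_smul hv, fun hv => ?_⟩
    rw [LinearMap.id_apply] at hv
    rw [hv, map_zero]

variable [GradedAlgebra 𝒜]

open LaurentPolynomial in
theorem hilbertFun_ofFn_smul_top [∀ j, FiniteDimensional k (ℳ j)] {d : ℕ} {x : Fin d → R}
    {δ : Fin d → ℤ} (hx : ∀ i, x i ∈ 𝒜 (δ i)) (hreg : IsWeaklyRegular M (List.ofFn x)) :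
    hilbertFun ℳ (Ideal.ofList (List.ofFn x) • ⊤ : Submodule R M) =
      laurentMul (∏ i, (1 - T (δ i))) (hilbertFun ℳ (⊥ : Submodule R M)) := by
  induction d with
  | zero => simp
  | succ d ih =>
    rw [List.ofFn_succ', List.concat_eq_append, isWeaklyRegular_append_iff,
      isWeaklyRegular_singleton_iff] at hreg
    have hhom : (Ideal.ofList (List.ofFn fun i => x i.castSucc)).IsHomogeneous 𝒜 := by
      refine Ideal.homogeneous_span _ _ fun r hr => ?_
      obtain ⟨i, rfl⟩ := List.mem_ofFn.1 hr
      exact ⟨_, hx _⟩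
    ext j
    rw [List.ofFn_succ', List.concat_eq_append, Ideal.ofList_append, Ideal.ofList_singleton,
      Submodule.sup_smul, hilbertFun_sup_smul_top (isHomogeneous_smul_top hhom) (hx _) hreg.2,
      ih (fun i => hx _) hreg.1, Fin.prod_univ_castSucc, mul_comm]
    simp

end Regular

section BracketPower

variable {k R : Type*} [Field k] [CommRing R] [Algebra k R]

theorem finite_quotient_of_le_radical [Algebra.FiniteType k R] {I K : Ideal R}
    (hI : IsFiniteLength R (R ⧸ I)) (hIK : I ≤ K.radical) : Module.Finite k (R ⧸ K) := by
  have : IsArtinianRing (R ⧸ I) :=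
    isArtinian_of_tower R (isFiniteLength_iff_isNoetherian_isArtinian.1 hI).2
  have hdim : ringKrullDim (R ⧸ I) ≤ (0 : ℕ) := Ring.krullDimLE_iff.1 inferInstance
  rw [Module.finite_iff_krullDimLE_zero, Ring.krullDimLE_iff]
  rw [ringKrullDim_quotient] at hdim ⊢
  have hsub : PrimeSpectrum.zeroLocus (K : Set R) ⊆ PrimeSpectrum.zeroLocus (I : Set R) := by
    rw [← PrimeSpectrum.zeroLocus_radical K]
    exact PrimeSpectrum.zeroLocus_anti_mono hIK
  exact (Order.krullDim_le_of_strictMono (Set.inclusion hsub) fun _ _ h => h).trans hdim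

theorem le_radical_bracketPow (I : Ideal R) (q : ℕ) : I ≤ (bracketPow I q).radical :=
  fun z hz => ⟨q, Ideal.subset_span ⟨z, hz, rfl⟩⟩

variable {ι : Type*} [DecidableEq ι] [AddMonoid ι] {σ : Type*} [SetLike σ R]
  [AddSubmonoidClass σ R] {𝒜 : ι → σ} [GradedRing 𝒜]

theorem isHomogeneous_bracketPow (p : ℕ) [Fact p.Prime] [CharP R p] {I : Ideal R}
    (hI : I.IsHomogeneous 𝒜) (n : ℕ) : (bracketPow I (p ^ n)).IsHomogeneous 𝒜 := by
  suffices h : bracketPow I (p ^ n) =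
      Ideal.span {r | ∃ z ∈ I, SetLike.IsHomogeneousElem 𝒜 z ∧ z ^ p ^ n = r} by
    rw [h]
    apply Ideal.homogeneous_span
    rintro _ ⟨z, -, ⟨t, ht⟩, rfl⟩
    exact ⟨_, SetLike.pow_mem_graded (p ^ n) ht⟩
  apply le_antisymm
  · refine Ideal.span_le.2 ?_
    rintro _ ⟨z, hz, rfl⟩
    classical
    change z ^ p ^ n ∈ _
    rw [← DirectSum.sum_support_decompose 𝒜 z, sum_pow_char_pow]
    exact Submodule.sum_mem _ fun t _ =>
      Ideal.subset_span ⟨_, hI t hz, ⟨t, SetLike.coe_mem _⟩, rfl⟩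
  · refine Ideal.span_mono ?_
    rintro _ ⟨z, hz, -, rfl⟩
    exact ⟨z, hz, rfl⟩

end BracketPower

section EulerCharacteristic

open DirectSum LaurentPolynomial

variable {k R : Type*} [Field k] [CommRing R] [Algebra k R] {𝒜 : ℤ → Submodule k R}
  [GradedAlgebra 𝒜] {F : ℕ → Type} [∀ i, AddCommGroup (F i)] [∀ i, Module R (F i)]
  [∀ i, Module k (F i)] [∀ i, IsScalarTower k R (F i)] {ℱ : ∀ i, ℤ → Submodule k (F i)}
  {dF : ∀ i, F (i + 1) →ₗ[R] F i}

theorem smul_top_inf_range_le_smul_range {n : ℕ}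
    (hproj : Module.Projective R (LinearMap.range (dF n)))
    (hex : LinearMap.range (dF (n + 1)) = LinearMap.ker (dF n)) (J : Ideal R) :
    J • ⊤ ⊓ LinearMap.range (dF (n + 1)) ≤ J • LinearMap.range (dF (n + 1)) := by
  obtain ⟨π, hπ⟩ := exists_isProj_ker_of_projective_range (dF n)
  exact hex ▸ smul_top_inf_le_smul_of_isProj hπ J

theorem torPieceDim_add_two_eq_zero {n : ℕ}
    (hproj : Module.Projective R (LinearMap.range (dF n)))
    (hex : ∀ i, LinearMap.range (dF (i + 1)) = LinearMap.ker (dF i)) (J : Ideal R) (j : ℤ) :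
    torPieceDim k F ℱ dF J (n + 2) j = 0 :=
  torPieceDim_succ_eq_zero hex (smul_top_inf_range_le_smul_range hproj (hex n) J) j

variable [∀ i, Decomposition (ℱ i)] [∀ i, SetLike.GradedSMul 𝒜 (ℱ i)]

theorem exists_finrank_boundariesPiece_eq_laurentMul [IsNoetherianRing R]
    [∀ i, Module.Finite R (F i)] (hneg : ∀ t < 0, 𝒜 t = ⊥)
    (hzero : ∀ r ∈ 𝒜 0, ∃ c : k, algebraMap k R c = r)
    (hdeg : ∀ i t, ∀ z ∈ ℱ (i + 1) t, dF i z ∈ ℱ i t)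
    (hex : ∀ i, LinearMap.range (dF (i + 1)) = LinearMap.ker (dF i)) {n : ℕ}
    (hproj : ∀ i, n ≤ i → Module.Projective R (LinearMap.range (dF i))) :
    ∃ B : ℤ[T;T⁻¹], ∀ J : Ideal R, J.IsHomogeneous 𝒜 → ∀ j : ℤ,
      (Module.finrank k (boundariesPiece k F ℱ dF J (n + 1) j) : ℤ) =
        laurentMul B (hilbertFun 𝒜 J) j := by
  have hZ : (LinearMap.range (dF (n + 1))).IsHomogeneous (ℱ (n + 1)) := by
    rintro t _ ⟨w, rfl⟩
    exact ⟨_, (decompose_map _ (hdeg (n + 1)) t w).symm⟩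
  obtain ⟨B, hB⟩ := exists_finrank_map_mkQ_inf_eq_laurentMul hneg hzero hZ
    (IsNoetherian.noetherian _) (hproj (n + 1) n.le_succ)
  refine ⟨B, fun J hJ j => ?_⟩
  rw [boundariesPiece_eq_map_inf_range hdeg hJ]
  exact hB J (smul_top_inf_range_le_smul_range (hproj n le_rfl) (hex n) J) j

theorem exists_sum_torPieceDim_eq_laurentMul [IsNoetherianRing R] [∀ i, Module.Finite R (F i)]
    [∀ i, Module.Projective R (F i)] (hneg : ∀ t < 0, 𝒜 t = ⊥)
    (hzero : ∀ r ∈ 𝒜 0, ∃ c : k, algebraMap k R c = r)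
    (hdeg : ∀ i t, ∀ z ∈ ℱ (i + 1) t, dF i z ∈ ℱ i t)
    (hex : ∀ i, LinearMap.range (dF (i + 1)) = LinearMap.ker (dF i)) {n : ℕ}
    (hproj : ∀ i, n ≤ i → Module.Projective R (LinearMap.range (dF i))) :
    ∃ Q : ℤ[T;T⁻¹], ∀ J : Ideal R, J.IsHomogeneous 𝒜 → ∀ j : ℤ,
      ∑ i ∈ Finset.range (n + 2), (-1 : ℤ) ^ i * torPieceDim k F ℱ dF J i j =
        laurentMul Q (hilbertFun 𝒜 J) j := by
  have hfin (i : ℕ) (j : ℤ) : FiniteDimensional k (ℱ i j) :=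
    finiteDimensional_piece_of_finite (𝒜 := 𝒜) hneg hzero j
  choose P hP using fun i =>
    exists_hilbertFun_smul_top_eq_laurentMul (𝒜 := 𝒜) (ℳ := ℱ i) hneg hzero
  obtain ⟨B, hB⟩ := exists_finrank_boundariesPiece_eq_laurentMul hneg hzero hdeg hex hproj
  refine ⟨∑ i ∈ Finset.range (n + 2), (-1 : ℤ) ^ i • P i - (-1 : ℤ) ^ (n + 1) • B,
    fun J hJ j => ?_⟩
  rw [sum_range_torPieceDim hdeg hJ hex, hB J hJ]
  simp only [hP, map_sub, map_sum, map_smul, LinearMap.sub_apply, LinearMap.sum_apply,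
    LinearMap.smul_apply, Pi.sub_apply, Finset.sum_apply, Pi.smul_apply, smul_eq_mul]

theorem finrank_map_mkQ_bot_smul_top {M : Type*} [AddCommGroup M] [Module R M] [Module k M]
    [IsScalarTower k R M] (V : Submodule k M) :
    Module.finrank k (V.map (((⊥ : Ideal R) • ⊤ : Submodule R M).mkQ.restrictScalars k)) =
      Module.finrank k V := by
  rw [finrank_map_eq_of_forall_eq_zero_iff (g := LinearMap.id), Submodule.map_id]
  simp

/-- The complex `F_•` with augmentation `ε` is a resolution of `R ⧸ X` by `R`-modules graded by
`ℱ`, all of whose maps preserve degrees. -/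
structure IsGradedResolution (𝒜 : ℤ → Submodule k R) (X : Ideal R)
    (ℱ : ∀ i, ℤ → Submodule k (F i)) (dF : ∀ i, F (i + 1) →ₗ[R] F i) (ε : F 0 →ₗ[R] R ⧸ X) :
    Prop where
  map_mem : ∀ i t, ∀ z ∈ ℱ (i + 1) t, dF i z ∈ ℱ i t
  augmentation_mem : ∀ t, ∀ z ∈ ℱ 0 t, ε z ∈ quotPiece 𝒜 X t
  surjective : Function.Surjective ε
  range_zero : LinearMap.range (dF 0) = LinearMap.ker ε
  range_succ : ∀ i, LinearMap.range (dF (i + 1)) = LinearMap.ker (dF i)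

theorem sum_torPieceDim_bot [∀ i j, FiniteDimensional k (ℱ i j)] {X : Ideal R}
    (hX : X.IsHomogeneous 𝒜) {ε : F 0 →ₗ[R] R ⧸ X} (hF : IsGradedResolution 𝒜 X ℱ dF ε)
    (n : ℕ) (j : ℤ) :
    ∑ i ∈ Finset.range (n + 1), (-1 : ℤ) ^ i * torPieceDim k F ℱ dF ⊥ i j =
      hilbertFun 𝒜 X j := by
  have hrank := finrank_map_add_finrank_inf_ker (ℱ 0 j) (ε.restrictScalars k)
  rw [map_eq_quotPiece_of_surjective hX ε hF.augmentation_mem hF.surjective,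
    LinearMap.ker_restrictScalars, ← hF.range_zero] at hrank
  have hzero : torPieceDim k F ℱ dF ⊥ 0 j = Module.finrank k (quotPiece 𝒜 X j) := by
    rw [torPieceDim, boundariesPiece_eq_map_inf_range hF.map_mem (Ideal.IsHomogeneous.bot 𝒜),
      cyclesPiece, finrank_map_mkQ_bot_smul_top, finrank_map_mkQ_bot_smul_top, ← hrank,
      Nat.add_sub_cancel]
  have hsucc (i : ℕ) : torPieceDim k F ℱ dF ⊥ (i + 1) j = 0 :=
    torPieceDim_succ_eq_zero hF.range_succ (by simp) j
  simp [Finset.sum_range_succ', hsucc, hzero, hilbertFun]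

end EulerCharacteristic

section KoszulPolynomial

open DirectSum LaurentPolynomial RingTheory.Sequence

theorem hilbertFun_bot_zero_ne_zero {k R : Type*} [Field k] [CommRing R] [Algebra k R]
    [Nontrivial R] (𝒜 : ℤ → Submodule k R) [GradedAlgebra 𝒜] [FiniteDimensional k (𝒜 0)] :
    hilbertFun 𝒜 (⊥ : Ideal R) 0 ≠ 0 := by
  have hone : (⊥ : Ideal R).mkQ 1 ≠ 0 := fun h =>
    one_ne_zero (α := R) <| (Submodule.mem_bot R).1 <| (Submodule.Quotient.mk_eq_zero _).1 h
  have : Nontrivial (quotPiece 𝒜 (⊥ : Ideal R) 0) :=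
    Submodule.nontrivial_iff_ne_bot.2 fun h => hone <| (Submodule.mem_bot k).1 <| h ▸
      Submodule.mem_map_of_mem (f := (⊥ : Ideal R).mkQ.restrictScalars k) SetLike.GradedOne.one_mem
  exact Nat.cast_ne_zero.2 (Module.finrank_pos (R := k)).ne'

theorem ofList_ofFn_smul_top {R : Type*} [CommRing R] {d : ℕ} (x : Fin d → R) :
    (Ideal.ofList (List.ofFn x) • ⊤ : Submodule R R) = Ideal.span (Set.range x) := by
  simp [Ideal.ofList, List.mem_ofFn, Set.range]

variable {k : Type*} {R : Type} [Field k] [CommRing R] [Algebra k R]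
  {𝒜 : ℤ → Submodule k R} [GradedAlgebra 𝒜] {d : ℕ} {x : Fin d → R}
  {F : ℕ → Type} [∀ i, AddCommGroup (F i)] [∀ i, Module R (F i)] [∀ i, Module.Projective R (F i)]
  {dF : ∀ i, F (i + 1) →ₗ[R] F i} {ε : F 0 →ₗ[R] R ⧸ Ideal.span (Set.range x)}

theorem projective_range_of_isWeaklyRegular (hreg : IsWeaklyRegular R (List.ofFn x))
    (hε : Function.Surjective ε) (hex₀ : LinearMap.range (dF 0) = LinearMap.ker ε)
    (hex : ∀ i, LinearMap.range (dF (i + 1)) = LinearMap.ker (dF i)) {i : ℕ} (hi : d ≤ i) :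
    Module.Projective R (LinearMap.range (dF i)) := by
  have hR : CategoryTheory.HasProjectiveDimensionLT (ModuleCat.of R R) 1 :=
    CategoryTheory.projective_iff_hasProjectiveDimensionLT_one.1
      ((IsProjective.iff_projective _).1 inferInstance)
  have hpd := hasProjectiveDimensionLT_quotient_ofList (ModuleCat.of R R) hR hreg
  refine projective_range_of_hasProjectiveDimensionLT ?_ hε hex₀ hex hi
  rwa [ofList_ofFn_smul_top, List.length_ofFn, add_comm] at hpd

variable [∀ i, Module k (F i)] [∀ i, IsScalarTower k R (F i)] [∀ i, Module.Finite R (F i)]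
  {ℱ : ∀ i, ℤ → Submodule k (F i)} [∀ i, Decomposition (ℱ i)] [∀ i, SetLike.GradedSMul 𝒜 (ℱ i)]

theorem sum_torPieceDim_eq_laurentMul_prod [IsNoetherianRing R] [Nontrivial R]
    (hneg : ∀ t < 0, 𝒜 t = ⊥) (hzero : ∀ r ∈ 𝒜 0, ∃ c : k, algebraMap k R c = r) {δ : Fin d → ℤ}
    (hx : ∀ i, x i ∈ 𝒜 (δ i)) (hreg : IsWeaklyRegular R (List.ofFn x))
    (hF : IsGradedResolution 𝒜 (Ideal.span (Set.range x)) ℱ dF ε)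
    {J : Ideal R} (hJ : J.IsHomogeneous 𝒜) (j : ℤ) :
    ∑ i ∈ Finset.range (d + 2), (-1 : ℤ) ^ i * torPieceDim k F ℱ dF J i j =
      laurentMul (∏ i, (1 - T (δ i))) (hilbertFun 𝒜 J) j := by
  have hfin (j : ℤ) : FiniteDimensional k (𝒜 j) := finiteDimensional_piece hneg hzero j
  have hFfin (i : ℕ) (j : ℤ) : FiniteDimensional k (ℱ i j) :=
    finiteDimensional_piece_of_finite (𝒜 := 𝒜) hneg hzero j
  have hX : (Ideal.span (Set.range x)).IsHomogeneous 𝒜 :=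
    Ideal.homogeneous_span 𝒜 _ (by rintro _ ⟨i, rfl⟩; exact ⟨_, hx i⟩)
  obtain ⟨Q, hQ⟩ := exists_sum_torPieceDim_eq_laurentMul (n := d) hneg hzero hF.map_mem
    hF.range_succ fun i hi =>
      projective_range_of_isWeaklyRegular hreg hF.surjective hF.range_zero hF.range_succ hi
  have hQbot : laurentMul Q (hilbertFun 𝒜 (⊥ : Ideal R)) =
      laurentMul (∏ i, (1 - T (δ i))) (hilbertFun 𝒜 (⊥ : Ideal R)) := by
    have hgr : SetLike.GradedSMul 𝒜 𝒜 := SetLike.GradedMul.toGradedSMul 𝒜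
    rw [← hilbertFun_ofFn_smul_top hx hreg, ofList_ofFn_smul_top]
    funext j
    rw [← hQ ⊥ (Ideal.IsHomogeneous.bot 𝒜), sum_torPieceDim_bot hX hF]
  have hQprod : Q - ∏ i, (1 - T (δ i)) = 0 := by
    refine eq_zero_of_laurentMul_eq_zero (h := hilbertFun 𝒜 (⊥ : Ideal R))
      (fun j hj => hilbertFun_eq_zero_of_le (by simp [hneg j hj]))
      (hilbertFun_bot_zero_ne_zero 𝒜) ?_
    rw [map_sub, LinearMap.sub_apply, hQbot, sub_self]
  rw [hQ J hJ, sub_eq_zero.1 hQprod]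

end KoszulPolynomial

section GeneratingFunction

open DirectSum LaurentPolynomial RingTheory.Sequence

theorem tsum_alternating_tsum_eq_eval₂_mul {N : ℕ} {τ : ℕ → ℤ → ℕ} {h : ℤ → ℤ} {Q : ℤ[T;T⁻¹]}
    (hvanish : ∀ i, N ≤ i → ∀ j, τ i j = 0) (hτ : ∀ i, (Function.support (τ i)).Finite)
    (hh : (Function.support h).Finite)
    (hQ : ∀ j, ∑ i ∈ Finset.range N, (-1 : ℤ) ^ i * τ i j = laurentMul Q h j) (t : ℂˣ) :
    ∑' i : ℕ, (-1 : ℂ) ^ i * ∑' j : ℤ, (τ i j : ℂ) * (t : ℂ) ^ j =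
      eval₂ (Int.castRingHom ℂ) t Q * ∑' j : ℤ, (h j : ℂ) * (t : ℂ) ^ j := by
  have hτsum (i : ℕ) : Summable fun j : ℤ => (τ i j : ℂ) * (t : ℂ) ^ j :=
    summable_of_hasFiniteSupport <| (hτ i).subset fun j hj hj' => hj (by simp [hj'])
  have hhsum : Summable fun j : ℤ => (h j : ℂ) * (t : ℂ) ^ j :=
    summable_of_hasFiniteSupport <| hh.subset fun j hj hj' => hj (by simp [hj'])
  rw [tsum_eq_sum (s := Finset.range N) fun i hi => by
      simp [hvanish i (by simpa using hi)],
    ← (hasSum_laurentMul hhsum.hasSum Q).tsum_eq]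
  simp_rw [← tsum_mul_left]
  rw [← Summable.tsum_finsetSum fun i _ => (hτsum i).mul_left _]
  refine tsum_congr fun j => ?_
  rw [← hQ, Int.cast_sum, Finset.sum_mul]
  exact Finset.sum_congr rfl fun i _ => by push_cast; ring

theorem tendsto_pow_mul_one_sub_exp {a : ℂ} (ha : 1 < ‖a‖) (c : ℂ) :
    Tendsto (fun n : ℕ => a ^ n * (1 - exp (-c / a ^ n))) atTop (nhds c) := by
  have ha0 : a ≠ 0 := norm_pos_iff.1 (one_pos.trans ha)
  have hderiv : HasDerivAt (fun z : ℂ => exp (-c * z)) (-c) 0 := by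
    simpa using ((hasDerivAt_id (0 : ℂ)).const_mul (-c)).cexp
  have hinv : Tendsto (fun n : ℕ => (a ^ n)⁻¹) atTop (nhdsWithin 0 {0}ᶜ) := by
    refine tendsto_nhdsWithin_iff.2 ⟨?_, Eventually.of_forall fun n => by simp [ha0]⟩
    simpa only [inv_pow] using tendsto_pow_atTop_nhds_zero_of_norm_lt_one (x := a⁻¹)
      (by simpa using inv_lt_one_of_one_lt₀ ha)
  have hslope := (hderiv.tendsto_slope_zero.comp hinv).neg
  rw [neg_neg] at hslope
  refine hslope.congr fun n => ?_
  simp only [Function.comp, zero_add, mul_zero, exp_zero, inv_inv, smul_eq_mul, div_eq_mul_inv]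
  ring

theorem exp_mul_intCast_div (z q : ℂ) (j : ℤ) : exp (z * j / q) = exp (z / q) ^ j := by
  rw [← exp_int_mul, mul_comm, mul_div_assoc]

theorem FnGen_eq_tsum_hilbertFun {k R : Type*} [Field k] [CommRing R] [Algebra k R]
    (𝒜 : ℤ → Submodule k R) (I : Ideal R) (p d n : ℕ) (y : ℂ) :
    FnGen k 𝒜 I p d n y = (1 / (p : ℂ) ^ n) ^ d *
      ∑' j : ℤ, (hilbertFun 𝒜 (bracketPow I (p ^ n)) j : ℂ) *
        exp (-Complex.I * y * j / (p : ℂ) ^ n) := by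
  have hJ : (bracketPow I (p ^ n) • ⊤ : Submodule R R) = bracketPow I (p ^ n) := by
    rw [smul_eq_mul, Ideal.mul_top]
  rw [← hJ]
  simp only [FnGen, hilbertFun, Int.cast_natCast]

theorem finite_quotient_smul_top {k R M : Type*} [Field k] [CommRing R] [Algebra k R]
    [AddCommGroup M] [Module R M] [Module k M] [IsScalarTower k R M] [Module.Finite R M]
    (J : Ideal R) [Module.Finite k (R ⧸ J)] :
    Module.Finite k (M ⧸ (J • ⊤ : Submodule R M)) := by
  have htower : IsScalarTower k (R ⧸ J) (M ⧸ (J • ⊤ : Submodule R M)) :=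
    IsScalarTower.of_algebraMap_smul fun c => (Submodule.mkQ_surjective _).forall.2 fun z =>
      congrArg Submodule.Quotient.mk (algebraMap_smul R c z)
  have hfin := Module.Finite.of_restrictScalars_finite R (R ⧸ J) (M ⧸ (J • ⊤ : Submodule R M))
  exact Module.Finite.trans (R ⧸ J) _

variable {k : Type*} {R : Type} [Field k] [CommRing R] [Algebra k R]
  {𝒜 : ℤ → Submodule k R} [GradedAlgebra 𝒜] {d : ℕ} {x : Fin d → R}
  {F : ℕ → Type} [∀ i, AddCommGroup (F i)] [∀ i, Module R (F i)]
  [∀ i, Module k (F i)] [∀ i, IsScalarTower k R (F i)] [∀ i, Module.Finite R (F i)]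
  {ℱ : ∀ i, ℤ → Submodule k (F i)} [∀ i, Decomposition (ℱ i)] [∀ i, SetLike.GradedSMul 𝒜 (ℱ i)]
  {dF : ∀ i, F (i + 1) →ₗ[R] F i} {ε : F 0 →ₗ[R] R ⧸ Ideal.span (Set.range x)}

theorem finite_support_torPieceDim [∀ i j, FiniteDimensional k (ℱ i j)] {J : Ideal R}
    (hJ : J.IsHomogeneous 𝒜) [Module.Finite k (R ⧸ J)] (i : ℕ) :
    (Function.support (torPieceDim k F ℱ dF J i)).Finite := by
  have := finite_quotient_smul_top (k := k) (M := F i) J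
  refine (finite_support_hilbertFun (isHomogeneous_smul_top (ℳ := ℱ i) hJ)).subset fun j hj => ?_
  exact ((Nat.cast_pos.2 (Nat.pos_of_ne_zero hj)).trans_le (torPieceDim_le_hilbertFun J i j)).ne'

variable [∀ i, Module.Projective R (F i)]

theorem tsum_torPieceDim_eq_prod_mul [IsNoetherianRing R] [Nontrivial R]
    (hneg : ∀ t < 0, 𝒜 t = ⊥) (hzero : ∀ r ∈ 𝒜 0, ∃ c : k, algebraMap k R c = r)
    {δ : Fin d → ℤ} (hx : ∀ i, x i ∈ 𝒜 (δ i)) (hreg : IsWeaklyRegular R (List.ofFn x))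
    (hF : IsGradedResolution 𝒜 (Ideal.span (Set.range x)) ℱ dF ε)
    {J : Ideal R} (hJ : J.IsHomogeneous 𝒜) [Module.Finite k (R ⧸ J)] (t : ℂˣ) :
    ∑' i : ℕ, (-1 : ℂ) ^ i * ∑' j : ℤ, (torPieceDim k F ℱ dF J i j : ℂ) * (t : ℂ) ^ j =
      (∏ i, (1 - (t : ℂ) ^ δ i)) * ∑' j : ℤ, (hilbertFun 𝒜 J j : ℂ) * (t : ℂ) ^ j := by
  have hvanish (i : ℕ) (hi : d + 2 ≤ i) (j : ℤ) : torPieceDim k F ℱ dF J i j = 0 := by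
    obtain ⟨n, rfl⟩ := Nat.exists_eq_add_of_le' hi
    exact torPieceDim_add_two_eq_zero (n := n + d) (projective_range_of_isWeaklyRegular hreg
      hF.surjective hF.range_zero hF.range_succ (Nat.le_add_left d n)) hF.range_succ J j
  have hfin (i : ℕ) (j : ℤ) : FiniteDimensional k (ℱ i j) :=
    finiteDimensional_piece_of_finite (𝒜 := 𝒜) hneg hzero j
  rw [tsum_alternating_tsum_eq_eval₂_mul hvanish (finite_support_torPieceDim hJ)
    (finite_support_hilbertFun hJ)
    (sum_torPieceDim_eq_laurentMul_prod hneg hzero hx hreg hF hJ) t]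
  simp [map_prod]

theorem tsum_torPieceDim_bracketPow [IsNoetherianRing R] [Nontrivial R] [Algebra.FiniteType k R]
    (hneg : ∀ t < 0, 𝒜 t = ⊥) (hzero : ∀ r ∈ 𝒜 0, ∃ c : k, algebraMap k R c = r)
    {δ : Fin d → ℕ} (hx : ∀ i, x i ∈ 𝒜 (δ i)) (hreg : IsWeaklyRegular R (List.ofFn x))
    (hF : IsGradedResolution 𝒜 (Ideal.span (Set.range x)) ℱ dF ε) {I : Ideal R}
    (hI : I.IsHomogeneous 𝒜) (hIfl : IsFiniteLength R (R ⧸ I)) (p : ℕ) [Fact p.Prime] [CharP R p]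
    (n : ℕ) (y : ℂ) :
    ∑' i : ℕ, (-1 : ℂ) ^ i * ∑' j : ℤ, (torPieceDim k F ℱ dF (bracketPow I (p ^ n)) i j : ℂ) *
        exp (-Complex.I * y * (j : ℂ) / (p : ℂ) ^ n) =
      (∏ j, (p : ℂ) ^ n * (1 - exp (-(Complex.I * y * δ j) / (p : ℂ) ^ n))) *
        FnGen k 𝒜 I p d n y := by
  have hfin : Module.Finite k (R ⧸ bracketPow I (p ^ n)) :=
    finite_quotient_of_le_radical hIfl (le_radical_bracketPow I _)
  have hp0 : ((p : ℂ) ^ n) ≠ 0 := pow_ne_zero _ (Nat.cast_ne_zero.2 (Fact.out : p.Prime).ne_zero)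
  have hχ := tsum_torPieceDim_eq_prod_mul hneg hzero hx hreg hF
    (isHomogeneous_bracketPow p hI n) (Units.mk0 _ (exp_ne_zero (-Complex.I * y / (p : ℂ) ^ n)))
  simp only [Units.val_mk0, ← exp_mul_intCast_div] at hχ
  rw [hχ, FnGen_eq_tsum_hilbertFun, Finset.prod_mul_distrib, Finset.prod_const, Finset.card_univ,
    Fintype.card_fin, one_div_pow, mul_mul_mul_comm, mul_one_div_cancel (pow_ne_zero d hp0),
    one_mul]
  simp only [neg_mul, Int.cast_natCast]

end GeneratingFunction

theorem frobenius_poincare_cohen_macaulay_general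
    {k R : Type} [Field k] [CommRing R] [Algebra k R] [Algebra.FiniteType k R]
    (p : ℕ) (hp : p.Prime) [CharP R p]
    (𝒜 : ℤ → Submodule k R) [GradedAlgebra 𝒜]
    (h𝒜neg : ∀ t : ℤ, t < 0 → 𝒜 t = ⊥)
    (h𝒜zero : ∀ x ∈ 𝒜 0, ∃ c : k, algebraMap k R c = x)
    (d : ℕ)
    (I : Ideal R) (hI : Ideal.IsHomogeneous 𝒜 I) (hIfl : IsFiniteLength R (R ⧸ I))
    (x : Fin d → R) (δ : Fin d → ℕ)
    (hxhom : ∀ j, x j ∈ 𝒜 (δ j))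
    (hreg : RingTheory.Sequence.IsRegular R (List.ofFn x))
    (F : ℕ → Type) [∀ i, AddCommGroup (F i)] [∀ i, Module R (F i)]
    [∀ i, Module k (F i)] [∀ i, IsScalarTower k R (F i)]
    [∀ i, Module.Projective R (F i)] [∀ i, Module.Finite R (F i)]
    (ℱ : ∀ i, ℤ → Submodule k (F i)) [∀ i, DirectSum.Decomposition (ℱ i)]
    (hℱ : ∀ (i : ℕ) (a b : ℤ), ∀ r ∈ 𝒜 a, ∀ z ∈ ℱ i b, r • z ∈ ℱ i (a + b))
    (dF : ∀ i, F (i + 1) →ₗ[R] F i)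
    (ε : F 0 →ₗ[R] R ⧸ Ideal.span (Set.range x))
    (hdFdeg : ∀ (i : ℕ) (t : ℤ), ∀ z ∈ ℱ (i + 1) t, dF i z ∈ ℱ i t)
    (hεdeg : ∀ t : ℤ, ∀ z ∈ ℱ 0 t,
      ε z ∈ (𝒜 t).map (Ideal.Quotient.mkₐ k (Ideal.span (Set.range x))).toLinearMap)
    (hεsurj : Function.Surjective ε)
    (hex0 : LinearMap.range (dF 0) = LinearMap.ker ε)
    (hex : ∀ i : ℕ, LinearMap.range (dF (i + 1)) = LinearMap.ker (dF i))
    (y : ℂ) (L : ℂ) (hL : Tendsto (fun n : ℕ => FnGen k 𝒜 I p d n y) atTop (nhds L)) :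
    Tendsto (fun n : ℕ =>
        ∑' i : ℕ, (-1 : ℂ) ^ i *
          ∑' j : ℤ, (torPieceDim k F ℱ dF (bracketPow I (p ^ n)) i j : ℂ) *
            Complex.exp (-Complex.I * y * (j : ℂ) / (p : ℂ) ^ n))
      atTop (nhds ((∏ j : Fin d, (δ j : ℂ)) * (Complex.I * y) ^ d * L)) := by
  have : Fact p.Prime := ⟨hp⟩
  have : IsNoetherianRing R := Algebra.FiniteType.isNoetherianRing k R
  have : Nontrivial R := hreg.nontrivial
  have (i : ℕ) : SetLike.GradedSMul 𝒜 (ℱ i) := ⟨fun {a b} r z hr hz => hℱ i a b r hr z hz⟩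
  have hF : IsGradedResolution 𝒜 (Ideal.span (Set.range x)) ℱ dF ε :=
    ⟨hdFdeg, hεdeg, hεsurj, hex0, hex⟩
  have hχ (n : ℕ) := tsum_torPieceDim_bracketPow h𝒜neg h𝒜zero hxhom hreg.toIsWeaklyRegular hF hI
    hIfl p n y
  have hprod : ∏ j, Complex.I * y * δ j = (∏ j : Fin d, (δ j : ℂ)) * (Complex.I * y) ^ d := by
    simp [Finset.prod_mul_distrib, mul_comm]
  simp_rw [hχ, ← hprod]
  exact (tendsto_finsetProd _ fun j _ =>
    tendsto_pow_mul_one_sub_exp (by simpa using hp.one_lt) _).mul hL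

/-- **Frobenius–Poincaré functions of Cohen–Macaulay graded rings via Koszul/Tor Euler
characteristics.**  Let `R` be Cohen–Macaulay (equivalently, the homogeneous system of
parameters `x_1, …, x_d` is a regular sequence) of dimension `d`, with `deg x_i = δ_i`,
and let `χ_n(t) = Σ_i (-1)^i H_{Tor_i^R(R/(x), R/I^{[pⁿ]})}(t)`, the Tor groups being
computed from a graded free resolution `F_•` of `R/(x_1,…,x_d)`.  Then for `y ≠ 0`,
`F(R,R,I)(y) = (δ_1⋯δ_d (iy)^d)⁻¹ · lim_n χ_n(e^{-iy/pⁿ})`. -/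
theorem frobenius_poincare_cohen_macaulay
    (k R : Type) [Field k] [CommRing R] [Algebra k R] [Algebra.FiniteType k R]
    (p : ℕ) (hp : p.Prime) [CharP R p]
    (𝒜 : ℤ → Submodule k R) [GradedAlgebra 𝒜]
    (h𝒜neg : ∀ t : ℤ, t < 0 → 𝒜 t = ⊥)
    (h𝒜zero : ∀ x ∈ 𝒜 0, ∃ c : k, algebraMap k R c = x)
    (d : ℕ) (hd : ringKrullDim R = d)
    (I : Ideal R) (hI : Ideal.IsHomogeneous 𝒜 I) (hIfl : IsFiniteLength R (R ⧸ I))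
    -- a homogeneous system of parameters, which is a regular sequence (Cohen–Macaulayness)
    (x : Fin d → R) (δ : Fin d → ℕ) (hδpos : ∀ j, 0 < δ j)
    (hxhom : ∀ j, x j ∈ 𝒜 (δ j))
    (hxfl : IsFiniteLength R (R ⧸ Ideal.span (Set.range x)))
    (hreg : RingTheory.Sequence.IsRegular R (List.ofFn x))
    -- a graded free resolution `F_• → R/(x_1,…,x_d)`
    (F : ℕ → Type) [∀ i, AddCommGroup (F i)] [∀ i, Module R (F i)]
    [∀ i, Module k (F i)] [∀ i, IsScalarTower k R (F i)]
    [∀ i, Module.Free R (F i)] [∀ i, Module.Finite R (F i)]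
    (ℱ : ∀ i, ℤ → Submodule k (F i)) [∀ i, DirectSum.Decomposition (ℱ i)]
    (hℱ : ∀ (i : ℕ) (a b : ℤ), ∀ r ∈ 𝒜 a, ∀ z ∈ ℱ i b, r • z ∈ ℱ i (a + b))
    (dF : ∀ i, F (i + 1) →ₗ[R] F i)
    (ε : F 0 →ₗ[R] R ⧸ Ideal.span (Set.range x))
    (hdFdeg : ∀ (i : ℕ) (t : ℤ), ∀ z ∈ ℱ (i + 1) t, dF i z ∈ ℱ i t)
    (hεdeg : ∀ t : ℤ, ∀ z ∈ ℱ 0 t,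
      ε z ∈ (𝒜 t).map (Ideal.Quotient.mkₐ k (Ideal.span (Set.range x))).toLinearMap)
    (hεsurj : Function.Surjective ε)
    (hex0 : LinearMap.range (dF 0) = LinearMap.ker ε)
    (hex : ∀ i : ℕ, LinearMap.range (dF (i + 1)) = LinearMap.ker (dF i))
    (y : ℂ) (hy : y ≠ 0)
    (L : ℂ) (hL : Tendsto (fun n : ℕ => FnGen k 𝒜 I p d n y) atTop (nhds L)) :
    ∃ χL : ℂ,
      Tendsto (fun n : ℕ =>
          ∑' i : ℕ, (-1 : ℂ) ^ i *
            ∑' j : ℤ, (torPieceDim k F ℱ dF (bracketPow I (p ^ n)) i j : ℂ) *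
              Complex.exp (-Complex.I * y * (j : ℂ) / (p : ℂ) ^ n))
        atTop (nhds χL) ∧
      L = (1 / ((∏ j : Fin d, (δ j : ℂ)) * (Complex.I * y) ^ d)) * χL := by
  have hfactor : (∏ j : Fin d, (δ j : ℂ)) * (Complex.I * y) ^ d ≠ 0 :=
    mul_ne_zero (Finset.prod_ne_zero_iff.2 fun j _ => Nat.cast_ne_zero.2 (hδpos j).ne')
      (pow_ne_zero _ (mul_ne_zero Complex.I_ne_zero hy))
  exact ⟨_, frobenius_poincare_cohen_macaulay_general p hp 𝒜 h𝒜neg h𝒜zero d I hI hIfl x δ hxhom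
    hreg F ℱ hℱ dF ε hdFdeg hεdeg hεsurj hex0 hex y L hL,
    by rw [one_div, inv_mul_cancel_left₀ hfactor]⟩

end
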